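/- arXiv:1901.02768 — 2 statements merged into one kernel-verified Lean document; each statement's English description precedes it below -/
import Mathlib

section
/- Assume X ≠ 0 so that λ_x = λ_max(XᵀX)/(4n) > 0. Every global minimizer z* of ℓ over the sparse set S is a strong τ-stationary point for every τ ∈ (0, 1/λ_x). -/
open scoped RealInnerProductSpace BigOperators
open Matrix

/-- The number of nonzero entries of a vector (the ℓ₀ "norm"). -/
noncomputable def norm0 {p : ℕ} (z : EuclideanSpace ℝ (Fin p)) : ℕ :=
  {i | z i ≠ 0}.ncard

/-- The Euclidean projection of `w` onto the sparse set `S = {x : ‖x‖₀ ≤ s}`: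
the set of points of `S` nearest to `w`. -/
noncomputable def projS {p : ℕ} (s : ℕ) (w : EuclideanSpace ℝ (Fin p)) :
    Set (EuclideanSpace ℝ (Fin p)) :=
  {x | norm0 x ≤ s ∧ ∀ x' : EuclideanSpace ℝ (Fin p), norm0 x' ≤ s → ‖w - x‖ ≤ ‖w - x'‖}

theorem hasDerivAt_log_one_add_exp (x : ℝ) :
    HasDerivAt (fun t => Real.log (1 + Real.exp t)) (Real.sigmoid x) x := by
  convert ((Real.hasDerivAt_exp x).const_add 1).log (by positivity) using 1
  rw [Real.sigmoid_def, Real.exp_neg]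
  field_simp
  ring

/-- The softplus function has second derivative at most `1/4`, so it lies below its
tangent parabola of curvature `1/4`. -/
theorem log_one_add_exp_le (a b : ℝ) :
    Real.log (1 + Real.exp b) ≤
      Real.log (1 + Real.exp a) + Real.sigmoid a * (b - a) + (b - a) ^ 2 / 8 := by
  have hderiv (x : ℝ) : HasDerivAt (fun t => t ^ 2 / 8 - Real.log (1 + Real.exp t))
      (x / 4 - Real.sigmoid x) x := by
    refine HasDerivAt.sub ?_ (hasDerivAt_log_one_add_exp x)
    exact ((hasDerivAt_pow 2 x).div_const 8).congr_deriv (by norm_num; ring)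
  have hderiv₂ (x : ℝ) : HasDerivAt (fun t => t / 4 - Real.sigmoid t)
      (1 / 4 - Real.sigmoid x * (1 - Real.sigmoid x)) x :=
    ((hasDerivAt_id x).div_const 4).sub (Real.hasDerivAt_sigmoid x)
  have hconv : ConvexOn ℝ Set.univ (fun t => t ^ 2 / 8 - Real.log (1 + Real.exp t)) := by
    refine Monotone.convexOn_univ_of_deriv (fun x => (hderiv x).differentiableAt) ?_
    rw [show deriv (fun t => t ^ 2 / 8 - Real.log (1 + Real.exp t)) =
      fun x => x / 4 - Real.sigmoid x from funext fun x => (hderiv x).deriv]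
    refine monotone_of_deriv_nonneg (fun x => (hderiv₂ x).differentiableAt) fun x => ?_
    rw [(hderiv₂ x).deriv]
    nlinarith [sq_nonneg (Real.sigmoid x - 1 / 2)]
  rcases lt_trichotomy a b with hab | rfl | hab
  · have h := hconv.le_slope_of_hasDerivAt (Set.mem_univ a) (Set.mem_univ b) hab (hderiv a)
    rw [slope_def_field, le_div_iff₀ (sub_pos.2 hab)] at h
    linarith
  · simp
  · have h := hconv.slope_le_of_hasDerivAt (Set.mem_univ b) (Set.mem_univ a) hab (hderiv a)
    rw [slope_def_field, div_le_iff₀ (sub_pos.2 hab)] at h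
    linarith

/-- The Rayleigh quotient of a real symmetric matrix is at most its largest eigenvalue. -/
theorem Matrix.IsHermitian.inner_toEuclideanLin_le {ι : Type*} [Fintype ι] [DecidableEq ι]
    {A : Matrix ι ι ℝ} (hA : A.IsHermitian) (v : EuclideanSpace ℝ ι) :
    ⟪toEuclideanLin A v, v⟫ ≤ (⨆ i, hA.eigenvalues i) * ‖v‖ ^ 2 := by
  have heig (i : ι) : ⟪toEuclideanLin A v, hA.eigenvectorBasis i⟫ =
      hA.eigenvalues i * ⟪v, hA.eigenvectorBasis i⟫ := by
    have hmul : toEuclideanLin A (hA.eigenvectorBasis i) =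
        hA.eigenvalues i • hA.eigenvectorBasis i := by
      ext j
      exact congrFun (hA.mulVec_eigenvectorBasis i) j
    rw [isSymmetric_toEuclideanLin_iff.2 hA, hmul, real_inner_smul_right]
  rw [← hA.eigenvectorBasis.sum_inner_mul_inner, ← hA.eigenvectorBasis.sum_sq_norm_inner_right,
    Finset.mul_sum]
  refine Finset.sum_le_sum fun i _ => ?_
  rw [heig, real_inner_comm, mul_assoc, Real.norm_eq_abs, sq_abs, ← sq]
  exact mul_le_mul_of_nonneg_right (le_ciSup (Set.finite_range _).bddAbove i) (sq_nonneg _)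

theorem sum_sq_sum_mul_le {n p : ℕ} (X : Matrix (Fin n) (Fin p) ℝ)
    (hH : (Xᵀ * X).IsHermitian) (v : EuclideanSpace ℝ (Fin p)) :
    ∑ i, (∑ j, X i j * v j) ^ 2 ≤ (⨆ i, hH.eigenvalues i) * ‖v‖ ^ 2 := by
  refine le_of_eq_of_le ?_ (hH.inner_toEuclideanLin_le v)
  have h : ⟪toEuclideanLin (Xᵀ * X) v, v⟫ = v.ofLp ⬝ᵥ ((Xᵀ * X) *ᵥ v.ofLp) := rfl
  rw [h, ← mulVec_mulVec, dotProduct_mulVec, vecMul_transpose]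
  simp only [dotProduct, mulVec, sq]

/-- The Gram matrix of a nonzero real matrix has a positive largest eigenvalue. -/
theorem iSup_eigenvalues_transpose_mul_self_pos {n p : ℕ} {X : Matrix (Fin n) (Fin p) ℝ}
    (hX : X ≠ 0) (hH : (Xᵀ * X).IsHermitian) : 0 < ⨆ i, hH.eigenvalues i := by
  obtain ⟨i, j, hij⟩ : ∃ i j, X i j ≠ 0 := by
    by_contra! h
    exact hX (Matrix.ext h)
  have h := sum_sq_sum_mul_le X hH (EuclideanSpace.single j 1)
  simp only [PiLp.single_apply, mul_ite, mul_one, mul_zero, Finset.sum_ite_eq',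
    Finset.mem_univ, if_true, PiLp.norm_single, norm_one, one_pow] at h
  exact (Finset.sum_pos' (fun k _ => sq_nonneg (X k j))
    ⟨i, Finset.mem_univ i, by positivity⟩).trans_le h

/-- Derivative of the logistic loss. -/
theorem inner_gradient_logistic {n p : ℕ} (X : Matrix (Fin n) (Fin p) ℝ) (y : Fin n → ℝ)
    {ℓ : EuclideanSpace ℝ (Fin p) → ℝ}
    (hℓ : ∀ z, ℓ z = (1 / (n : ℝ)) *
      ∑ i, (Real.log (1 + Real.exp (∑ j, X i j * z j)) - y i * (∑ j, X i j * z j)))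
    (z v : EuclideanSpace ℝ (Fin p)) :
    ⟪gradient ℓ z, v⟫ = (1 / (n : ℝ)) *
      ∑ i, (Real.sigmoid (∑ j, X i j * z j) - y i) * (∑ j, X i j * v j) := by
  let L (i : Fin n) : EuclideanSpace ℝ (Fin p) →L[ℝ] ℝ :=
    ∑ j, X i j • EuclideanSpace.proj j
  have hL (i : Fin n) (w : EuclideanSpace ℝ (Fin p)) : L i w = ∑ j, X i j * w j := by
    simp [L]
  have hderiv : HasFDerivAt ℓ ((1 / (n : ℝ)) •
      ∑ i, (Real.sigmoid (L i z) • L i - y i • L i)) z := by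
    rw [show ℓ = fun w => (1 / (n : ℝ)) *
      ∑ i, (Real.log (1 + Real.exp (L i w)) - y i * L i w) by
        funext w
        simp only [hℓ, hL]]
    refine (HasFDerivAt.fun_sum fun i _ => HasFDerivAt.sub ?_ ?_).const_mul _
    · exact (hasDerivAt_log_one_add_exp (L i z)).comp_hasFDerivAt z (L i).hasFDerivAt
    · exact (L i).hasFDerivAt.const_mul _
  rw [← InnerProductSpace.toDual_apply_apply (𝕜 := ℝ), toDual_gradient, hderiv.fderiv]
  simp [hL, sub_mul]

/-- Quadratic upper bound on the logistic loss. -/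
theorem logistic_le_quadratic {n p : ℕ} (X : Matrix (Fin n) (Fin p) ℝ) (y : Fin n → ℝ)
    {ℓ : EuclideanSpace ℝ (Fin p) → ℝ}
    (hℓ : ∀ z, ℓ z = (1 / (n : ℝ)) *
      ∑ i, (Real.log (1 + Real.exp (∑ j, X i j * z j)) - y i * (∑ j, X i j * z j)))
    (hH : (Xᵀ * X).IsHermitian) (z w : EuclideanSpace ℝ (Fin p)) :
    ℓ w ≤ ℓ z + ⟪gradient ℓ z, w - z⟫ +
      (⨆ i, hH.eigenvalues i) / (4 * n) / 2 * ‖w - z‖ ^ 2 := by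
  have hsub (i : Fin n) : ∑ j, X i j * (w - z) j = ∑ j, X i j * w j - ∑ j, X i j * z j := by
    simp [mul_sub]
  calc ℓ w ≤ (1 / (n : ℝ)) * ∑ i,
        ((Real.log (1 + Real.exp (∑ j, X i j * z j)) - y i * (∑ j, X i j * z j)) +
          (Real.sigmoid (∑ j, X i j * z j) - y i) * (∑ j, X i j * (w - z) j) +
          (∑ j, X i j * (w - z) j) ^ 2 / 8) := by
        rw [hℓ]
        refine mul_le_mul_of_nonneg_left (Finset.sum_le_sum fun i _ => ?_) (by positivity)
        rw [hsub]
        linarith [log_one_add_exp_le (∑ j, X i j * z j) (∑ j, X i j * w j)]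
    _ = ℓ z + ⟪gradient ℓ z, w - z⟫ +
        1 / (8 * n) * ∑ i, (∑ j, X i j * (w - z) j) ^ 2 := by
        rw [hℓ z, inner_gradient_logistic X y hℓ, Finset.sum_add_distrib,
          Finset.sum_add_distrib, ← Finset.sum_div]
        ring
    _ ≤ ℓ z + ⟪gradient ℓ z, w - z⟫ +
        1 / (8 * n) * ((⨆ i, hH.eigenvalues i) * ‖w - z‖ ^ 2) := by
        gcongr
        exact sum_sq_sum_mul_le X hH (w - z)
    _ = _ := by ring

/-- if `X ≠ 0` then `λ_x = λ_max(XᵀX)/(4n) > 0`, and every global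
minimizer `z*` of `ℓ` over the sparse set `S` is a strong τ-stationary point for
every `τ ∈ (0, 1/λ_x)`. -/
theorem global_minimizer_is_strong_stationary (n p s : ℕ)
    (hn : 0 < n) (hs : 0 < s) (hsp : s < p)
    (X : Matrix (Fin n) (Fin p) ℝ) (hX : X ≠ 0) (y : Fin n → ℝ)
    (hy : ∀ i, y i = 0 ∨ y i = 1)
    (ℓ : EuclideanSpace ℝ (Fin p) → ℝ)
    (hℓ : ∀ z, ℓ z = (1 / (n : ℝ)) *
      ∑ i, (Real.log (1 + Real.exp (∑ j, X i j * z j)) - y i * (∑ j, X i j * z j)))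
    (hH : (Xᵀ * X).IsHermitian)
    (lamx : ℝ) (hlamx : lamx = (⨆ i, hH.eigenvalues i) / (4 * n))
    (zs : EuclideanSpace ℝ (Fin p)) (hzs : norm0 zs ≤ s)
    (hmin : ∀ z : EuclideanSpace ℝ (Fin p), norm0 z ≤ s → ℓ zs ≤ ℓ z) :
    0 < lamx ∧
      ∀ τ : ℝ, 0 < τ → τ < 1 / lamx →
        projS s (zs - τ • gradient ℓ zs) = {zs} := by
  have hlam : 0 < lamx := by
    have := iSup_eigenvalues_transpose_mul_self_pos hX hH
    rw [hlamx]
    positivity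
  refine ⟨hlam, fun τ hτ hτlam => ?_⟩
  rw [lt_div_iff₀ hlam] at hτlam
  set g := gradient ℓ zs with hg
  have hgap (x : EuclideanSpace ℝ (Fin p)) (hx : norm0 x ≤ s) :
      ‖zs - τ • g - zs‖ ^ 2 + (1 - τ * lamx) * ‖x - zs‖ ^ 2 ≤ ‖zs - τ • g - x‖ ^ 2 := by
    have hquad := logistic_le_quadratic X y hℓ hH zs x
    rw [← hlamx, ← hg] at hquad
    have hnonneg : 0 ≤ ⟪g, x - zs⟫ + lamx / 2 * ‖x - zs‖ ^ 2 := by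
      linarith [hmin x hx]
    have hexpand : ‖zs - τ • g - x‖ ^ 2 =
        ‖zs - τ • g - zs‖ ^ 2 + 2 * (τ * ⟪g, x - zs⟫) + ‖x - zs‖ ^ 2 := by
      rw [show zs - τ • g - x = -(τ • g + (x - zs)) by abel,
        show zs - τ • g - zs = -(τ • g) by abel, norm_neg, norm_neg,
        norm_add_sq_real, real_inner_smul_left]
    nlinarith [mul_nonneg hτ.le hnonneg]
  ext x
  rw [Set.mem_singleton_iff]
  constructor
  · rintro ⟨hx, hxmin⟩
    have hle := pow_le_pow_left₀ (norm_nonneg _) (hxmin zs hzs) 2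
    have hsq : ‖x - zs‖ ^ 2 = 0 := by
      nlinarith [hgap x hx, sq_nonneg ‖x - zs‖]
    exact sub_eq_zero.1 (norm_eq_zero.1 (pow_eq_zero_iff two_ne_zero |>.1 hsq))
  · rintro rfl
    refine ⟨hzs, fun x' hx' => abs_le_of_sq_le_sq' ?_ (norm_nonneg _) |>.2⟩
    nlinarith [hgap x' hx', sq_nonneg ‖x' - x‖]
end

section
/- Let z be a strong τ-stationary point (for some τ > 0) with ‖z‖₀ = s, and let 0 < τ₁ ≤ τ. Then supp(z) is the unique index set of cardinality s containing the s largest absolute entries of z − τ₁∇ℓ(z): for every i ∈ supp(z) and every j ∉ supp(z), |z_i − τ₁ ∇_i ℓ(z)| > |z_j − τ₁ ∇_j ℓ(z)|. -/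
open scoped RealInnerProductSpace BigOperators
open Matrix

/-- If `z` is the only projection of `w`, a sparse point at least as close to `w` equals `z`. -/
theorem eq_of_projS_eq_singleton {p s : ℕ} {w z x : EuclideanSpace ℝ (Fin p)}
    (h : projS s w = {z}) (hx : norm0 x ≤ s)
    (hle : ∑ k, (w k - x k) ^ 2 ≤ ∑ k, (w k - z k) ^ 2) : x = z := by
  have hz : z ∈ projS s w := h ▸ Set.mem_singleton z
  have hnorm : ‖w - x‖ ≤ ‖w - z‖ := by
    simpa [EuclideanSpace.norm_eq] using Real.sqrt_le_sqrt hle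
  have hmem : x ∈ projS s w := ⟨hx, fun x' hx' => hnorm.trans (hz.2 x' hx')⟩
  simpa [h] using hmem

/-- A unique projection `z` of `w` agrees with `w` on the support of `z`. -/
theorem apply_eq_of_projS_eq_singleton {p s : ℕ} {w z : EuclideanSpace ℝ (Fin p)}
    (h : projS s w = {z}) {i : Fin p} (hi : z i ≠ 0) : w i = z i := by
  have hz : z ∈ projS s w := h ▸ Set.mem_singleton z
  let x : EuclideanSpace ℝ (Fin p) := WithLp.toLp 2 (Function.update z i (w i))
  have hxi : x i = w i := by simp [x]
  have hxk : ∀ k, k ≠ i → x k = z k := fun k hk => by simp [x, hk]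
  have hx : norm0 x ≤ s := by
    refine (Set.ncard_le_ncard (fun k hk => ?_) (Set.toFinite _)).trans hz.1
    by_cases hki : k = i
    · exact hki ▸ hi
    · simpa [hxk k hki] using hk
  have hxz : x = z := by
    refine eq_of_projS_eq_singleton h hx (Finset.sum_le_sum fun k _ => ?_)
    by_cases hki : k = i
    · subst hki
      simpa [hxi] using sq_nonneg (w k - z k)
    · rw [hxk k hki]
  rw [← hxi, hxz]

/-- If `z` is the unique projection of `w`, the entries of `w` off the support of `z` are strictly
smaller in absolute value than those of `z` on its support. -/
theorem abs_lt_of_projS_eq_singleton {p s : ℕ} {w z : EuclideanSpace ℝ (Fin p)}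
    (h : projS s w = {z}) {i j : Fin p} (hi : z i ≠ 0) (hj : z j = 0) : |w j| < |z i| := by
  by_contra! hle
  have hz : z ∈ projS s w := h ▸ Set.mem_singleton z
  have hij : i ≠ j := fun hij => hi (hij ▸ hj)
  have hwi := apply_eq_of_projS_eq_singleton h hi
  let x : EuclideanSpace ℝ (Fin p) :=
    WithLp.toLp 2 (Function.update (Function.update z i 0) j (w j))
  have hxi : x i = 0 := by simp [x, hij]
  have hxj : x j = w j := by simp [x]
  have hxk : ∀ k, k ≠ i → k ≠ j → x k = z k := fun k hki hkj => by simp [x, hki, hkj]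
  have hx : norm0 x ≤ s := by
    have hsub : {k | x k ≠ 0} ⊆ insert j ({k | z k ≠ 0} \ {i}) := by
      intro k hk
      by_cases hkj : k = j
      · exact Or.inl hkj
      · have hki : k ≠ i := fun hki => hk (hki ▸ hxi)
        exact Or.inr ⟨by simpa [hxk k hki hkj] using hk, hki⟩
    refine (Set.ncard_le_ncard hsub (Set.toFinite _)).trans ?_
    rw [Set.ncard_exchange (by simpa using hj) hi]
    exact hz.1
  have hxz : x = z := by
    refine eq_of_projS_eq_singleton h hx ?_
    rw [← sub_nonpos, ← Finset.sum_sub_distrib, Fintype.sum_eq_add i j hij]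
    · have := sq_le_sq.mpr hle
      rw [hxi, hxj, hj, hwi]
      linarith
    · rintro k ⟨hki, hkj⟩
      rw [hxk k hki hkj, sub_self]
  exact hi (hxz ▸ hxi)

/-- if `z` is a strong τ-stationary point with `‖z‖₀ = s` and
`0 < τ₁ ≤ τ`, then the entries of `z − τ₁∇ℓ(z)` on the support of `z` strictly
dominate those off the support: for every `i ∈ supp(z)` and `j ∉ supp(z)`,
`|zᵢ − τ₁∇ᵢℓ(z)| > |z_j − τ₁∇_jℓ(z)|`, so `supp(z)` is the unique index set of
cardinality `s` carrying the `s` largest absolute entries of `z − τ₁∇ℓ(z)`. -/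
theorem strong_stationary_support_dominates (n p s : ℕ)
    (hn : 0 < n) (hs : 0 < s) (hsp : s < p)
    (X : Matrix (Fin n) (Fin p) ℝ) (y : Fin n → ℝ)
    (hy : ∀ i, y i = 0 ∨ y i = 1)
    (ℓ : EuclideanSpace ℝ (Fin p) → ℝ)
    (hℓ : ∀ z, ℓ z = (1 / (n : ℝ)) *
      ∑ i, (Real.log (1 + Real.exp (∑ j, X i j * z j)) - y i * (∑ j, X i j * z j)))
    (τ τ₁ : ℝ) (hτ : 0 < τ) (hτ₁ : 0 < τ₁) (hττ₁ : τ₁ ≤ τ)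
    (z : EuclideanSpace ℝ (Fin p))
    (hstat : projS s (z - τ • gradient ℓ z) = {z})
    (hcard : norm0 z = s) :
    ∀ i, z i ≠ 0 → ∀ j, z j = 0 →
      |z j - τ₁ * gradient ℓ z j| < |z i - τ₁ * gradient ℓ z i| := by
  intro i hi j hj
  have hwi := apply_eq_of_projS_eq_singleton hstat hi
  have hlt := abs_lt_of_projS_eq_singleton hstat hi hj
  simp only [PiLp.sub_apply, PiLp.smul_apply, smul_eq_mul] at hwi hlt
  have hgi : gradient ℓ z i = 0 := by
    have : τ * gradient ℓ z i = 0 := by linarith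
    exact (mul_eq_zero.mp this).resolve_left hτ.ne'
  rw [hj, zero_sub, abs_neg, abs_mul, abs_of_pos hτ] at hlt
  rw [hj, hgi, mul_zero, sub_zero, zero_sub, abs_neg, abs_mul, abs_of_pos hτ₁]
  exact (mul_le_mul_of_nonneg_right hττ₁ (abs_nonneg _)).trans_lt hlt
end
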